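/- There exists a universal constant C > 0 such that the following holds. Let G and H be projection games, let γ ∈ (0, 1/100] and η ≥ 0. If the collision values satisfy ‖H‖² ≤ 1 − γ and ‖G ⊗ H‖² ≥ 1 − η − γ, then ‖G‖² ≥ 1 − C·(η + √(γη)). -/

import Mathlib

open Finset

/-- A projection game: finite nonempty question sets `Q1` (Alice) and `Q2` (Bob),
a finite nonempty alphabet `A`, and a probability mass function `μ` on triples
`(u, v, π)` where `π : A → Option A` encodes a projection constraint
(the answer pair `(α, β)` satisfies `π` iff `π β = some α`). -/
structure ProjGame where
  Q1 : Type
  Q2 : Type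
  A : Type
  [fQ1 : Fintype Q1]
  [fQ2 : Fintype Q2]
  [fA : Fintype A]
  [neQ1 : Nonempty Q1]
  [neQ2 : Nonempty Q2]
  [neA : Nonempty A]
  [dQ1 : DecidableEq Q1]
  [dQ2 : DecidableEq Q2]
  [dA : DecidableEq A]
  μ : Q1 × Q2 × (A → Option A) → ℝ
  μ_nonneg : ∀ x, 0 ≤ μ x
  μ_sum : ∑ x, μ x = 1

attribute [instance] ProjGame.fQ1 ProjGame.fQ2 ProjGame.fA
  ProjGame.neQ1 ProjGame.neQ2 ProjGame.neA ProjGame.dQ1 ProjGame.dQ2 ProjGame.dA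

namespace ProjGame

variable (G : ProjGame)

/-- The `U`-marginal (Alice-side marginal) of `μ`. -/
noncomputable def wU (u : G.Q1) : ℝ := ∑ v, ∑ π, G.μ (u, v, π)

/-- The `V`-marginal (Bob-side marginal) of `μ`. -/
noncomputable def wV (v : G.Q2) : ℝ := ∑ u, ∑ π, G.μ (u, v, π)

/-- The game operator: `(Gf)(u,α) = E_{(v,π)|u} [∑_{β : π β = some α} f (v,β)]`. -/
noncomputable def op (f : G.Q2 × G.A → ℝ) : G.Q1 × G.A → ℝ :=
  fun p =>
    (∑ v, ∑ π, G.μ (p.1, v, π) * ∑ β, if π β = some p.2 then f (v, β) else 0) / G.wU p.1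

/-- Squared norm on functions on `U × Σ`: `‖g‖² = E_u [∑_α g(u,α)²]`. -/
noncomputable def normUsq (g : G.Q1 × G.A → ℝ) : ℝ := ∑ u, G.wU u * ∑ α, (g (u, α)) ^ 2

/-- Squared norm on functions on `V × Σ`: `‖f‖² = E_v [∑_β f(v,β)²]`. -/
noncomputable def normVsq (f : G.Q2 × G.A → ℝ) : ℝ := ∑ v, G.wV v * ∑ β, (f (v, β)) ^ 2

/-- Inner product `⟨g, g'⟩ = E_u [∑_α g(u,α) g'(u,α)]`. -/
noncomputable def inn (g g' : G.Q1 × G.A → ℝ) : ℝ :=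
  ∑ u, G.wU u * ∑ α, g (u, α) * g' (u, α)

/-- An assignment for Bob. -/
def IsBob (f : G.Q2 × G.A → ℝ) : Prop := (∀ p, 0 ≤ f p) ∧ ∀ v, ∑ β, f (v, β) = 1

/-- An assignment for Alice. -/
def IsAlice (g : G.Q1 × G.A → ℝ) : Prop := (∀ p, 0 ≤ g p) ∧ ∀ u, ∑ α, g (u, α) = 1

/-- The value of the game: `val(G) = max ⟨g, Gf⟩` over assignments. -/
noncomputable def val : ℝ :=
  sSup { x | ∃ f g, G.IsBob f ∧ G.IsAlice g ∧ x = G.inn g (G.op f) }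

/-- The collision value `‖G‖ = max_f ‖Gf‖` over assignments `f` for Bob. -/
noncomputable def collVal : ℝ :=
  sSup { x | ∃ f, G.IsBob f ∧ x = Real.sqrt (G.normUsq (G.op f)) }

/-- Product of projection constraints. -/
def tensorC {A A' : Type} (π : A → Option A) (π' : A' → Option A') :
    A × A' → Option (A × A') :=
  fun b => (π b.1).bind fun a => (π' b.2).map fun a' => (a, a')

/-- The product (parallel repetition) of two projection games. -/
noncomputable def tensor (G H : ProjGame) : ProjGame where
  Q1 := G.Q1 × H.Q1
  Q2 := G.Q2 × H.Q2
  A := G.A × H.A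
  μ := fun x =>
    ∑ y : (G.Q1 × G.Q2 × (G.A → Option G.A)) × (H.Q1 × H.Q2 × (H.A → Option H.A)),
      if ((y.1.1, y.2.1), (y.1.2.1, y.2.2.1), tensorC y.1.2.2 y.2.2.2) = x
      then G.μ y.1 * H.μ y.2 else 0
  μ_nonneg := by
    intro x
    refine Finset.sum_nonneg fun y _ => ?_
    split
    · exact mul_nonneg (G.μ_nonneg _) (H.μ_nonneg _)
    · exact le_refl 0
  μ_sum := by
    rw [Finset.sum_comm]
    simp only [Finset.sum_ite_eq, Finset.mem_univ, if_true]
    rw [Fintype.sum_prod_type]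
    calc (∑ y1, ∑ y2, G.μ y1 * H.μ y2)
        = (∑ y1, G.μ y1) * (∑ y2, H.μ y2) := by rw [Finset.sum_mul_sum]
      _ = 1 := by rw [G.μ_sum, H.μ_sum, mul_one]

/-- `G.iterTensor k` is the `(k+1)`-fold parallel repetition `G^{⊗(k+1)}`. -/
noncomputable def iterTensor (G : ProjGame) : ℕ → ProjGame
  | 0 => G
  | n + 1 => G.tensor (G.iterTensor n)

/-- `val₊(G)`: supremum of values of vector assignments. -/
noncomputable def valPlus (G : ProjGame) : ℝ :=
  sSup { x | ∃ n : ℕ, 0 < n ∧ ∃ f : G.Q2 × G.A → Fin n → ℝ,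
    (∀ p i, 0 ≤ f p i) ∧
    (∀ v, Real.sqrt (∑ i, (∑ β, f (v, β) i) ^ 2) ≤ 1) ∧
    x = Real.sqrt (∑ u, G.wU u * ∑ α, ∑ i, (G.op (fun q => f q i) (u, α)) ^ 2) }

/-- `‖Th‖² = E_v [(∑_β h(v,β))²]`. -/
noncomputable def Tnormsq (G : ProjGame) (h : G.Q2 × G.A → ℝ) : ℝ :=
  ∑ v, G.wV v * (∑ β, h (v, β)) ^ 2

/-- `λ₊(G)`: supremum of `‖Gh‖/‖Th‖` over nonnegative `h` with `‖Th‖ > 0`. -/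
noncomputable def lambdaPlus (G : ProjGame) : ℝ :=
  sSup { x | ∃ h : G.Q2 × G.A → ℝ, (∀ p, 0 ≤ h p) ∧
    0 < Real.sqrt (G.Tnormsq h) ∧
    x = Real.sqrt (G.normUsq (G.op h)) / Real.sqrt (G.Tnormsq h) }

/-- The symmetrized distribution on `V × V` (with the constraints marginalized out). -/
noncomputable def msym (G : ProjGame) (v v' : G.Q2) : ℝ :=
  ∑ u, ((∑ π, G.μ (u, v, π)) * (∑ π', G.μ (u, v', π'))) / G.wU u

/-- `G` is `γ`-expanding: the Markov operator of the symmetrized constraint graph has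
spectral gap at least `γ`, i.e. `|⟨x, Ax⟩| ≤ (1-γ) E_v[x(v)²]` for mean-zero `x`. -/
def IsExpanding (G : ProjGame) (γ : ℝ) : Prop :=
  ∀ x : G.Q2 → ℝ, (∑ v, G.wV v * x v) = 0 →
    |∑ v, ∑ v', G.msym v v' * x v * x v'| ≤ (1 - γ) * ∑ v, G.wV v * (x v) ^ 2

/-- The symmetrized distribution on `(v, v', π, π')`. -/
noncomputable def msymFull (G : ProjGame) (v v' : G.Q2) (π π' : G.A → Option G.A) : ℝ :=
  ∑ u, (G.μ (u, v, π) * G.μ (u, v', π')) / G.wU u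

/-- The value of the assignment `x` in the symmetrized game `G_sym`. -/
noncomputable def symValAssign (G : ProjGame) (x : G.Q2 → G.A) : ℝ :=
  ∑ v, ∑ v', ∑ π, ∑ π', G.msymFull v v' π π' *
    (if ∃ α, π (x v) = some α ∧ π' (x v') = some α then 1 else 0)

/-- The value of the symmetrized game `G_sym`. -/
noncomputable def symVal (G : ProjGame) : ℝ :=
  sSup { r | ∃ x : G.Q2 → G.A, r = G.symValAssign x }

end ProjGame


theorem pg_thresh {K : Type*} [Fintype K] (w x y : K → ℝ) (hw : ∀ k, 0 ≤ w k) :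
    ∃ t : ℝ, 1/2 ≤ t ∧ t ≤ 3/4 ∧
      ∑ k, w k * |(if t < x k then (1:ℝ) else 0) - (if t < y k then 1 else 0)|
      ≤ 4 * ∑ k, w k * |max (1/2) (min (3/4) (x k)) - max (1/2) (min (3/4) (y k))| := by
  have hint : ∀ z : ℝ, IntervalIntegrable (fun t : ℝ => if t < z then (1:ℝ) else 0)
      MeasureTheory.volume (1/2) (3/4) := by
    intro z
    apply AntitoneOn.intervalIntegrable
    intro a _ b _ hab
    simp only
    split_ifs <;> first | linarith | norm_num
  have hval : ∀ z : ℝ, ∫ t in (1/2:ℝ)..(3/4), (if t < z then (1:ℝ) else 0)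
      = max (1/2) (min (3/4) z) - 1/2 := by
    intro z
    set c := max (1/2) (min (3/4) z) with hc
    have h1 : (1/2:ℝ) ≤ c := le_max_left _ _
    have h2 : c ≤ (3/4:ℝ) := max_le (by norm_num) (min_le_left _ _)
    rw [intervalIntegral.integral_of_le (by norm_num)]
    have : (fun t : ℝ => if t < z then (1:ℝ) else 0) = (Set.Iio z).indicator (fun _ => (1:ℝ)) := by
      ext t; simp [Set.indicator]
    rw [this, MeasureTheory.setIntegral_indicator measurableSet_Iio]
    simp only [MeasureTheory.integral_const, smul_eq_mul, mul_one, MeasureTheory.measureReal_restrict_apply_univ]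
    rw [MeasureTheory.measureReal_congr (t := Set.Ioc (1/2) c)]
    · rw [Real.volume_real_Ioc_of_le h1]
    · have hz : (Set.Ioc (1/2:ℝ) (3/4) ∩ Set.Iio z : Set ℝ) =ᵐ[MeasureTheory.volume] (Set.Ioc (1/2:ℝ) (3/4) ∩ Set.Iic z : Set ℝ) :=
        (Filter.EventuallyEq.refl _ _).inter MeasureTheory.Iio_ae_eq_Iic
      have he : (Set.Ioc (1/2:ℝ) (3/4) ∩ Set.Iic z : Set ℝ) = Set.Ioc (1/2) c := by
        ext t
        simp only [Set.mem_inter_iff, Set.mem_Ioc, Set.mem_Iic, hc, le_max_iff, le_min_iff]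
        constructor
        · rintro ⟨⟨a, b⟩, c⟩; exact ⟨a, Or.inr ⟨b, c⟩⟩
        · rintro ⟨a, b | b⟩
          · linarith
          · exact ⟨⟨a, b.1⟩, b.2⟩
      rw [he] at hz
      exact hz
  have hmono : ∀ x y : ℝ, y ≤ x → ∀ t : ℝ, (if t < y then (1:ℝ) else 0) ≤ (if t < x then (1:ℝ) else 0) := by
    intro x y h t
    split_ifs <;> first | linarith | norm_num
  have habs : ∀ x y : ℝ, y ≤ x → (fun t : ℝ => |(if t < x then (1:ℝ) else 0) - (if t < y then 1 else 0)|)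
      = fun t => (if t < x then (1:ℝ) else 0) - (if t < y then 1 else 0) := by
    intro x y h; ext t
    exact abs_of_nonneg (sub_nonneg.2 (hmono x y h t))
  have hd0 : ∀ x y : ℝ, y ≤ x → IntervalIntegrable (fun t : ℝ => |(if t < x then (1:ℝ) else 0) - (if t < y then 1 else 0)|) MeasureTheory.volume (1/2) (3/4) ∧ ∫ t in (1/2:ℝ)..(3/4), |(if t < x then (1:ℝ) else 0) - (if t < y then 1 else 0)| = |max (1/2) (min (3/4) x) - max (1/2) (min (3/4) y)| := by
    intro x y h
    rw [habs x y h, intervalIntegral.integral_sub (hint _) (hint _), hval, hval, abs_of_nonneg]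
    · exact ⟨(hint _).sub (hint _), by ring⟩
    · rw [sub_nonneg]; gcongr
  have hd : ∀ x y : ℝ, IntervalIntegrable (fun t : ℝ => |(if t < x then (1:ℝ) else 0) - (if t < y then 1 else 0)|) MeasureTheory.volume (1/2) (3/4) ∧ ∫ t in (1/2:ℝ)..(3/4), |(if t < x then (1:ℝ) else 0) - (if t < y then 1 else 0)| = |max (1/2) (min (3/4) x) - max (1/2) (min (3/4) y)| := by
    intro x y
    rcases le_total y x with h | h
    · exact hd0 x y h
    · have := hd0 y x h
      simp only [abs_sub_comm (max (1/2) (min (3/4) y)), fun t : ℝ => abs_sub_comm (if t < y then (1:ℝ) else 0)] at this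
      exact this
  by_contra hcon
  push Not at hcon
  set T := ∑ k, w k * |max (1/2) (min (3/4) (x k)) - max (1/2) (min (3/4) (y k))| with hT
  have hI : ∫ t in (1/2:ℝ)..(3/4), ∑ k, w k * |(if t < x k then (1:ℝ) else 0) - (if t < y k then 1 else 0)| = T := by
    rw [intervalIntegral.integral_finsetSum]
    · simp only [intervalIntegral.integral_const_mul, (hd _ _).2, hT]
    · intro k _; exact (hd _ _).1.const_mul _
  have hII : IntervalIntegrable (fun t => ∑ k, w k * |(if t < x k then (1:ℝ) else 0) - (if t < y k then 1 else 0)|) MeasureTheory.volume (1/2) (3/4) := by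
    have := IntervalIntegrable.sum (μ := MeasureTheory.volume) (a := 1/2) (b := 3/4) univ (f := fun k (t : ℝ) => w k * |(if t < x k then (1:ℝ) else 0) - (if t < y k then 1 else 0)|) (fun k _ => (hd _ _).1.const_mul _)
    have he : (fun t => ∑ k, w k * |(if t < x k then (1:ℝ) else 0) - (if t < y k then 1 else 0)|) = ∑ k, fun (t : ℝ) => w k * |(if t < x k then (1:ℝ) else 0) - (if t < y k then 1 else 0)| := by
      ext t; simp
    rw [he]
    exact this
  have hlt : ∫ t in (1/2:ℝ)..(3/4), (0:ℝ) < ∫ t in (1/2:ℝ)..(3/4), ((∑ k, w k * |(if t < x k then (1:ℝ) else 0) - (if t < y k then 1 else 0)|) - 4 * T) := by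
    rw [intervalIntegral.integral_zero]
    apply intervalIntegral.intervalIntegral_pos_of_pos_on
    · exact hII.sub (by simp)
    · intro t ht
      have := hcon t ht.1.le ht.2.le
      linarith
    · norm_num
  rw [intervalIntegral.integral_sub hII (by simp), hI] at hlt
  simp at hlt
  linarith

theorem pg_greedy {V I P : Type*} [Fintype I] [Nonempty I] [Fintype P] [DecidableEq V]
    (s t : P → V) (W : P → ℝ) (hW : ∀ p, 0 ≤ W p) (ρ : I → ℝ) (hρ : ∀ i, 0 ≤ ρ i)
    (B : I → V → Prop) [∀ i v, Decidable (B i v)] [DecidableEq I] (c : I → P → ℝ) (hc : ∀ i p, 0 ≤ c i p)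
    (hc1 : ∀ i p, B i (s p) → ¬ B i (t p) → 1 ≤ c i p)
    (hc2 : ∀ i p, ¬ B i (s p) → B i (t p) → 1 ≤ c i p) :
    ∀ (n : ℕ) (S : Finset V), S.card ≤ n →
    (∀ v ∈ S, 1/2 ≤ ∑ i, ρ i * (if B i v then 1 else 0)) →
    ∃ σ : V → I, (∀ v ∈ S, B (σ v) v) ∧
      ∑ p, W p * (if s p ∈ S ∧ t p ∈ S then (if σ (s p) = σ (t p) then c (σ (s p)) p else 1) else 0)
      ≤ ∑ p, W p * (if s p ∈ S ∧ t p ∈ S then 2 * ∑ i, ρ i * c i p else 0) := by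
  intro n
  induction n with
  | zero =>
    intro S hS _
    have : S = ∅ := by simpa using hS
    subst this
    exact ⟨fun _ => Classical.arbitrary I, by simp, by simp⟩
  | succ n ih =>
    intro S hS hB
    rcases S.eq_empty_or_nonempty with rfl | ⟨v0, hv0⟩
    · exact ⟨fun _ => Classical.arbitrary I, by simp, by simp⟩
    set sep : P → ℝ := fun p => 2 * ∑ i, ρ i * c i p with hsep
    have hsep0 : ∀ p, 0 ≤ ∑ i, ρ i * c i p := fun p => sum_nonneg fun i _ => mul_nonneg (hρ i) (hc i p)
    let X : I → ℝ := fun i => ∑ p, W p * (if (s p ∈ S ∧ t p ∈ S) ∧ (B i (s p) ∨ B i (t p)) then c i p - sep p else 0)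
    have hX : ∃ i, (∃ v ∈ S, B i v) ∧ X i ≤ 0 := by
      by_contra hcon
      push Not at hcon
      have hX0 : ∀ i, 0 ≤ X i := by
        intro i
        by_cases h : ∃ v ∈ S, B i v
        · obtain ⟨v, hv, hb⟩ := h
          exact (hcon i ⟨v, hv, hb⟩).le
        · push Not at h
          apply le_of_eq; symm
          apply sum_eq_zero
          intro p _
          rw [if_neg, mul_zero]
          rintro ⟨⟨h1, h2⟩, h3 | h3⟩
          · exact h _ h1 h3
          · exact h _ h2 h3
      have hpos : 0 < ∑ i, ρ i * X i := by
        have h1 := hB v0 hv0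
        have : ∃ i ∈ (univ : Finset I), 0 < ρ i * (if B i v0 then (1:ℝ) else 0) := by
          apply exists_lt_of_sum_lt (f := fun _ => (0:ℝ))
          simp only [sum_const_zero]; linarith
        obtain ⟨i, _, hi⟩ := this
        by_cases hb : B i v0
        · simp only [hb, if_true, mul_one] at hi
          apply sum_pos' (fun j _ => mul_nonneg (hρ j) (hX0 j))
          exact ⟨i, mem_univ _, mul_pos hi (hcon i ⟨v0, hv0, hb⟩)⟩
        · simp [hb] at hi
      have hle : ∑ i, ρ i * X i ≤ 0 := by
        simp only [X, mul_sum]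
        rw [sum_comm]
        apply sum_nonpos
        intro p _
        by_cases hp : s p ∈ S ∧ t p ∈ S
        · have h1 : ∑ i, ρ i * (if B i (s p) then (1:ℝ) else 0) ≤ ∑ i, ρ i * (if B i (s p) ∨ B i (t p) then 1 else 0) := by
            apply sum_le_sum; intro i _
            apply mul_le_mul_of_nonneg_left _ (hρ i)
            by_cases h : B i (s p)
            · simp [h]
            · simp only [h, if_false, false_or]; split_ifs <;> norm_num
          have h2 := hB _ hp.1
          have h3 : ∑ i, ρ i * (if B i (s p) ∨ B i (t p) then c i p else 0) ≤ ∑ i, ρ i * c i p := by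
            apply sum_le_sum; intro i _
            apply mul_le_mul_of_nonneg_left _ (hρ i)
            split_ifs
            · exact le_rfl
            · exact hc i p
          have h4 : ∑ i, ρ i * (W p * (if (s p ∈ S ∧ t p ∈ S) ∧ (B i (s p) ∨ B i (t p)) then c i p - sep p else 0))
            = W p * (∑ i, ρ i * (if B i (s p) ∨ B i (t p) then c i p else 0) - sep p * ∑ i, ρ i * (if B i (s p) ∨ B i (t p) then 1 else 0)) := by
            rw [mul_sum, ← sum_sub_distrib, mul_sum]
            apply sum_congr rfl; intro i _
            by_cases h : B i (s p) ∨ B i (t p)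
            · rw [if_pos ⟨hp, h⟩, if_pos h, if_pos h]; ring
            · rw [if_neg (fun h' => h h'.2), if_neg h, if_neg h]; ring
          rw [h4]
          apply mul_nonpos_of_nonneg_of_nonpos (hW p)
          have h5 : sep p * (1/2) ≤ sep p * ∑ i, ρ i * (if B i (s p) ∨ B i (t p) then (1:ℝ) else 0) :=
            mul_le_mul_of_nonneg_left (h2.trans h1) (by simp only [hsep]; linarith [hsep0 p])
          simp only [hsep] at h5 ⊢
          linarith
        · apply le_of_eq
          apply sum_eq_zero; intro i _
          rw [if_neg (fun h => hp h.1)]; ring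
      linarith
    obtain ⟨i, ⟨v, hv, hbv⟩, hXi⟩ := hX
    obtain ⟨σ', h1, h2⟩ := ih (S.filter (fun v => ¬ B i v)) (by
      have : (S.filter (fun v => ¬ B i v)).card < S.card := by
        apply card_lt_card
        refine ⟨filter_subset _ _, fun h => ?_⟩
        have := h hv
        simp [hbv] at this
      omega) (fun v hv => hB v (mem_filter.1 hv).1)
    refine ⟨fun v => if B i v then i else σ' v, ?_, ?_⟩
    · intro v hv
      by_cases h : B i v
      · simp [h]
      · simp only [h, if_false]
        exact h1 v (by simp [hv, h])
    · have key : ∀ p, W p * (if s p ∈ S ∧ t p ∈ S then (if (if B i (s p) then i else σ' (s p)) = (if B i (t p) then i else σ' (t p)) then c (if B i (s p) then i else σ' (s p)) p else 1) else 0)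
        ≤ W p * (if s p ∈ S.filter (fun v => ¬ B i v) ∧ t p ∈ S.filter (fun v => ¬ B i v) then (if σ' (s p) = σ' (t p) then c (σ' (s p)) p else 1) else 0)
          + W p * (if (s p ∈ S ∧ t p ∈ S) ∧ (B i (s p) ∨ B i (t p)) then c i p - sep p else 0)
          + (W p * (if s p ∈ S ∧ t p ∈ S then sep p else 0)
          - W p * (if s p ∈ S.filter (fun v => ¬ B i v) ∧ t p ∈ S.filter (fun v => ¬ B i v) then sep p else 0)) := by
        intro p
        rw [← mul_sub, ← mul_add, ← mul_add]
        apply mul_le_mul_of_nonneg_left _ (hW p)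
        by_cases hp : s p ∈ S ∧ t p ∈ S
        · obtain ⟨hs, ht⟩ := hp
          by_cases b1 : B i (s p) <;> by_cases b2 : B i (t p)
          · simp [b1, b2, hs, ht]
          · have : i ≠ σ' (t p) := by
              intro h; have := h1 (t p) (by simp [ht, b2]); rw [← h] at this; exact b2 this
            simp [b1, b2, hs, ht, this, hc1 i p b1 b2]
          · have : σ' (s p) ≠ i := by
              intro h; have := h1 (s p) (by simp [hs, b1]); rw [h] at this; exact b1 this
            simp [b1, b2, hs, ht, this, hc2 i p b1 b2]
          · simp [b1, b2, hs, ht]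
        · have h' : ¬ (s p ∈ S.filter (fun v => ¬ B i v) ∧ t p ∈ S.filter (fun v => ¬ B i v)) := by
            rintro ⟨a, b⟩; exact hp ⟨(mem_filter.1 a).1, (mem_filter.1 b).1⟩
          rw [if_neg hp, if_neg h', if_neg (fun h => hp h.1), if_neg hp, if_neg h']; norm_num
      refine (sum_le_sum fun p _ => key p).trans ?_
      rw [sum_add_distrib, sum_add_distrib, sum_sub_distrib]
      have : ∑ p, W p * (if (s p ∈ S ∧ t p ∈ S) ∧ (B i (s p) ∨ B i (t p)) then c i p - sep p else 0) ≤ 0 := hXi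
      simp only [hsep] at this ⊢
      linarith

theorem pg_clamp (x y : ℝ) (hx : 0 ≤ x) (hx1 : x ≤ 1) (hy : 0 ≤ y) (hy1 : y ≤ 1) :
    |max (1/2) (min (3/4) x) - max (1/2) (min (3/4) y)|
      ≤ 8 * (x - y)^2 + 4 * Real.sqrt ((x - y)^2 * (x * (1-x) + y * (1-y))) := by
  wlog h : y ≤ x generalizing x y
  · have := this y x hy hy1 hx hx1 (by linarith)
    rw [abs_sub_comm]
    refine this.trans (le_of_eq ?_)
    have e : (y - x)^2 * (y * (1-y) + x * (1-x)) = (x - y)^2 * (x * (1-x) + y * (1-y)) := by ring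
    rw [e]; ring
  have hs := Real.sqrt_nonneg ((x - y)^2 * (x * (1-x) + y * (1-y)))
  have hq := sq_nonneg (x - y)
  have hxy : max (1/2) (min (3/4) x) - max (1/2) (min (3/4) y) ≤ x - y := by
    rcases le_total (3/4) x with a | a <;> rcases le_total (3/4) y with b | b <;>
      simp only [a, b, min_eq_left, min_eq_right] <;>
      rcases le_total (1/2) x with c | c <;> rcases le_total (1/2) y with d | d <;>
      (try simp only [c, d, max_eq_left, max_eq_right]) <;> norm_num <;> linarith
  have hm : max (1/2) (min (3/4) y) ≤ max (1/2) (min (3/4) x) := by gcongr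
  rw [abs_of_nonneg (by linarith)]
  by_cases h1 : x ≤ 1/2
  · have e1 : max (1/2) (min (3/4) x) = 1/2 := max_eq_left ((min_le_right _ _).trans h1)
    have e2 : (1/2:ℝ) ≤ max (1/2) (min (3/4) y) := le_max_left _ _
    rw [e1]; linarith
  by_cases h2 : 3/4 ≤ y
  · have e1 : max (1/2) (min (3/4) x) ≤ 3/4 := max_le (by norm_num) (min_le_left _ _)
    have e2 : (3/4:ℝ) ≤ max (1/2) (min (3/4) y) := le_max_of_le_right (le_min le_rfl h2)
    linarith
  push Not at h1 h2
  by_cases h3 : x ≤ 7/8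
  · have : (x - y) / 4 ≤ Real.sqrt ((x - y)^2 * (x * (1-x) + y * (1-y))) := by
      apply Real.le_sqrt_of_sq_le
      have a1 : 1/16 ≤ x * (1-x) + y * (1-y) := by nlinarith [mul_nonneg hy (sub_nonneg.2 hy1)]
      nlinarith
    linarith
  · push Not at h3
    nlinarith

theorem pg_proj {A : Type*} [Fintype A] [DecidableEq A] (π : A → Option A) (g : A → ℝ)
    (hg : ∀ β, 0 ≤ g β) :
    (∀ α, 0 ≤ ∑ β, if π β = some α then g β else 0) ∧
    ∑ α, (∑ β, if π β = some α then g β else 0) ≤ ∑ β, g β := by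
  constructor
  · intro α; apply sum_nonneg; intro β _; split_ifs
    · exact hg β
    · exact le_rfl
  · rw [sum_comm]
    apply sum_le_sum; intro β _
    rcases hπ : π β with _ | a
    · simp [hg β]
    · simp

theorem pg_proj2 {A : Type*} [Fintype A] [DecidableEq A] (π π' : A → Option A) (g g' : A → ℝ)
    (hg : ∀ β, 0 ≤ g β) (hg' : ∀ β, 0 ≤ g' β) :
    0 ≤ ∑ α, (∑ β, if π β = some α then g β else 0) * (∑ β, if π' β = some α then g' β else 0) ∧
    ∑ α, (∑ β, if π β = some α then g β else 0) * (∑ β, if π' β = some α then g' β else 0)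
      ≤ (∑ β, g β) * ∑ β, g' β := by
  obtain ⟨a1, a2⟩ := pg_proj π g hg
  obtain ⟨b1, b2⟩ := pg_proj π' g' hg'
  constructor
  · exact sum_nonneg fun α _ => mul_nonneg (a1 α) (b1 α)
  · calc _ ≤ ∑ α, (∑ β, if π β = some α then g β else 0) * (∑ β, g' β) := by
          apply sum_le_sum; intro α _
          apply mul_le_mul_of_nonneg_left _ (a1 α)
          exact (single_le_sum (f := fun α => ∑ β, if π' β = some α then g' β else 0) (fun α _ => b1 α) (mem_univ α)).trans b2
      _ = (∑ α, (∑ β, if π β = some α then g β else 0)) * (∑ β, g' β) := by rw [sum_mul]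
      _ ≤ _ := mul_le_mul_of_nonneg_right a2 (sum_nonneg fun β _ => hg' β)

theorem pg_arith (X Y b d s c t : ℝ) (ht : 1/2 ≤ t) (hX : t < X) (hY : t < Y)
    (h1 : 4 * d + s ≤ c) (h2 : X * Y - b ≤ d) (h3 : 0 ≤ d) (h4 : 0 ≤ s) :
    1 - c ≤ b / (X * Y) := by
  have hXY : 1/4 ≤ X * Y := by nlinarith
  rw [le_div_iff₀ (by linarith)]
  have e1 : (1 - c) * (X * Y) ≤ (1 - 4 * d) * (X * Y) :=
    mul_le_mul_of_nonneg_right (by linarith) (by linarith)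
  have e2 : d * (1/4) ≤ d * (X * Y) := mul_le_mul_of_nonneg_left hXY h3
  linarith

set_option maxHeartbeats 1000000 in
theorem pg_core {E V A I A' : Type*} [Fintype E] [Fintype V] [Fintype A] [Fintype I] [Fintype A']
    [DecidableEq V] [DecidableEq A] [Nonempty A] [Nonempty I] [Nonempty A']
    (vt : E → V) (pr : E → A → Option A) (W : E × E → ℝ) (hW : ∀ p, 0 ≤ W p)
    (hW1 : ∑ p, W p = 1) (ρ : I → ℝ) (hρ : ∀ i, 0 ≤ ρ i) (hρ1 : ∑ i, ρ i = 1)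
    (h : V → A → I → A' → ℝ) (h0 : ∀ v β i a, 0 ≤ h v β i a)
    (hx1 : ∀ v i, ∑ a, ∑ β, h v β i a ≤ 1)
    (γ η : ℝ) (hγ0 : 0 < γ) (hγ : γ ≤ 1/100) (hη : 0 ≤ η)
    (hN : ∀ v, ∑ i, ρ i * ∑ a, (∑ β, h v β i a)^2 ≤ 1 - γ)
    (hM : 1 - η - γ ≤ ∑ p, W p * ∑ i, ρ i * ∑ a, ∑ α,
      (∑ β, if pr p.1 β = some α then h (vt p.1) β i a else 0) *
      (∑ β, if pr p.2 β = some α then h (vt p.2) β i a else 0)) :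
    ∃ f : V → A → ℝ, (∀ v β, 0 ≤ f v β) ∧ (∀ v, ∑ β, f v β = 1) ∧
      1 - 1000 * (η + Real.sqrt (γ * η)) ≤ ∑ p, W p * ∑ α,
        (∑ β, if pr p.1 β = some α then f (vt p.1) β else 0) *
        (∑ β, if pr p.2 β = some α then f (vt p.2) β else 0) := by
  classical
  set x : V → I → A' → ℝ := fun v i a => ∑ β, h v β i a with hx
  have x0 : ∀ v i a, 0 ≤ x v i a := fun v i a => sum_nonneg fun β _ => h0 v β i a
  have x1 : ∀ v i a, x v i a ≤ 1 := fun v i a =>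
    (single_le_sum (f := fun a => x v i a) (fun a _ => x0 v i a) (mem_univ a)).trans (hx1 v i)
  set bb : E × E → I → A' → ℝ := fun p i a => ∑ α,
      (∑ β, if pr p.1 β = some α then h (vt p.1) β i a else 0) *
      (∑ β, if pr p.2 β = some α then h (vt p.2) β i a else 0) with hbb
  have bbx : ∀ p i a, bb p i a ≤ x (vt p.1) i a * x (vt p.2) i a := fun p i a =>
    (pg_proj2 (pr p.1) (pr p.2) _ _ (fun β => h0 (vt p.1) β i a) (fun β => h0 (vt p.2) β i a)).2
  set D : E × E → I → A' → ℝ := fun p i a =>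
    (x (vt p.1) i a ^2 + x (vt p.2) i a ^2)/2 - bb p i a with hD
  have D1 : ∀ p i a, (x (vt p.1) i a - x (vt p.2) i a)^2 ≤ 2 * D p i a := by
    intro p i a; have := bbx p i a; simp only [hD]; nlinarith
  have D0 : ∀ p i a, 0 ≤ D p i a := fun p i a => by nlinarith [D1 p i a, sq_nonneg (x (vt p.1) i a - x (vt p.2) i a)]
  have D2 : ∀ p i a, x (vt p.1) i a * x (vt p.2) i a - bb p i a ≤ D p i a := by
    intro p i a; simp only [hD]; nlinarith [sq_nonneg (x (vt p.1) i a - x (vt p.2) i a)]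
  set N : V → ℝ := fun v => ∑ i, ρ i * ∑ a, (x v i a)^2 with hNdef
  -- the averaging functional
  set Q : (E × E → I → A' → ℝ) → ℝ := fun φ => ∑ p, W p * ∑ i, ρ i * ∑ a, φ p i a with hQ
  have Qadd : ∀ φ ψ, Q (fun p i a => φ p i a + ψ p i a) = Q φ + Q ψ := by
    intro φ ψ; simp only [hQ, sum_add_distrib, mul_add]
  have Qmul : ∀ (c : ℝ) φ, Q (fun p i a => c * φ p i a) = c * Q φ := by
    intro c φ; simp only [hQ, mul_sum]
    refine sum_congr rfl fun p _ => sum_congr rfl fun i _ => sum_congr rfl fun a _ => by ring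
  have Qmono : ∀ φ ψ, (∀ p i a, φ p i a ≤ ψ p i a) → Q φ ≤ Q ψ := by
    intro φ ψ hle
    refine sum_le_sum fun p _ => mul_le_mul_of_nonneg_left (sum_le_sum fun i _ =>
      mul_le_mul_of_nonneg_left (sum_le_sum fun a _ => hle p i a) (hρ i)) (hW p)
  have Qk : ∀ φ, Q φ = ∑ k : (E × E) × I × A', (W k.1 * ρ k.2.1) * φ k.1 k.2.1 k.2.2 := by
    intro φ
    rw [Fintype.sum_prod_type]
    refine sum_congr rfl fun p _ => ?_
    rw [Fintype.sum_prod_type]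
    simp only [mul_sum]
    refine sum_congr rfl fun i _ => sum_congr rfl fun a _ => by ring
  have QN1 : Q (fun p i a => x (vt p.1) i a ^2) = ∑ p, W p * N (vt p.1) := rfl
  have QN2 : Q (fun p i a => x (vt p.2) i a ^2) = ∑ p, W p * N (vt p.2) := rfl
  have hWN : ∀ g : E × E → V, ∑ p, W p * N (g p) ≤ 1 - γ := by
    intro g
    calc _ ≤ ∑ p, W p * (1 - γ) := sum_le_sum fun p _ => mul_le_mul_of_nonneg_left (hN _) (hW p)
      _ = 1 - γ := by rw [← sum_mul, hW1, one_mul]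
  have hQbb : 1 - η - γ ≤ Q bb := hM
  have hQD' : Q D = (∑ p, W p * N (vt p.1) + ∑ p, W p * N (vt p.2))/2 - Q bb := by
    have e : D = fun p i a => (1/2) * (x (vt p.1) i a ^2 + x (vt p.2) i a ^2) + (-1) * bb p i a := by
      funext p i a; simp only [hD]; ring
    rw [e, Qadd, Qmul, Qmul, Qadd, QN1, QN2]; ring
  have hQD0 : 0 ≤ Q D := sum_nonneg fun p _ => mul_nonneg (hW p) (sum_nonneg fun i _ =>
      mul_nonneg (hρ i) (sum_nonneg fun a _ => D0 p i a))
  have hQD : Q D ≤ η := by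
    have := hWN (fun p => vt p.1); have := hWN (fun p => vt p.2); linarith
  -- the quantity x(1-x)
  have hS1 : ∀ v, ∑ i, ρ i * ∑ a, x v i a * (1 - x v i a) ≤ 1 - N v := by
    intro v
    have : 1 - N v = ∑ i, ρ i * (1 - ∑ a, x v i a ^2) := by
      simp only [mul_sub, sum_sub_distrib, mul_one, hρ1, hNdef]
    rw [this]
    refine sum_le_sum fun i _ => mul_le_mul_of_nonneg_left ?_ (hρ i)
    have := hx1 v i
    have e : ∑ a, x v i a * (1 - x v i a) = ∑ a, x v i a - ∑ a, x v i a ^2 := by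
      rw [← sum_sub_distrib]; refine sum_congr rfl fun a _ => by ring
    rw [e]; linarith
  have hQS : Q (fun p i a => x (vt p.1) i a * (1 - x (vt p.1) i a) + x (vt p.2) i a * (1 - x (vt p.2) i a))
      ≤ 2 * (γ + η) := by
    rw [Qadd]
    have e : ∀ g : E × E → V, Q (fun p i a => x (g p) i a * (1 - x (g p) i a)) ≤ 1 - ∑ p, W p * N (g p) := by
      intro g
      have : 1 - ∑ p, W p * N (g p) = ∑ p, W p * (1 - N (g p)) := by
        simp only [mul_sub, sum_sub_distrib, mul_one, hW1]
      rw [this]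
      exact sum_le_sum fun p _ => mul_le_mul_of_nonneg_left (hS1 _) (hW p)
    have e1 := e (fun p => vt p.1); have e2 := e (fun p => vt p.2)
    linarith
  obtain ⟨t, ht1, ht2, ht⟩ := pg_thresh (K := (E × E) × I × A') (fun k => W k.1 * ρ k.2.1)
    (fun k => x (vt k.1.1) k.2.1 k.2.2) (fun k => x (vt k.1.2) k.2.1 k.2.2)
    (fun k => mul_nonneg (hW _) (hρ _))
  set sp : E × E → I → A' → ℝ := fun p i a =>
    |(if t < x (vt p.1) i a then (1:ℝ) else 0) - (if t < x (vt p.2) i a then 1 else 0)| with hsp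
  have hQsp : Q sp ≤ 4 * (16 * η + 8 * (η + Real.sqrt (γ * η))) := by
    rw [Qk]
    refine ht.trans (mul_le_mul_of_nonneg_left ?_ (by norm_num))
    calc _ ≤ Q (fun p i a => 8 * (x (vt p.1) i a - x (vt p.2) i a)^2 + 4 * Real.sqrt ((x (vt p.1) i a - x (vt p.2) i a)^2 * (x (vt p.1) i a * (1 - x (vt p.1) i a) + x (vt p.2) i a * (1 - x (vt p.2) i a)))) := by
          rw [Qk]
          refine sum_le_sum fun k _ => mul_le_mul_of_nonneg_left ?_ (mul_nonneg (hW _) (hρ _))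
          exact pg_clamp _ _ (x0 _ _ _) (x1 _ _ _) (x0 _ _ _) (x1 _ _ _)
      _ = 8 * Q (fun p i a => (x (vt p.1) i a - x (vt p.2) i a)^2) + 4 * Q (fun p i a => Real.sqrt ((x (vt p.1) i a - x (vt p.2) i a)^2 * (x (vt p.1) i a * (1 - x (vt p.1) i a) + x (vt p.2) i a * (1 - x (vt p.2) i a)))) := by
          rw [Qadd, Qmul, Qmul]
      _ ≤ 16 * η + 8 * (η + Real.sqrt (γ * η)) := by
          have q1 : Q (fun p i a => (x (vt p.1) i a - x (vt p.2) i a)^2) ≤ 2 * η := by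
            refine (Qmono _ _ D1).trans ?_
            rw [Qmul]; linarith
          have q2 : Q (fun p i a => Real.sqrt ((x (vt p.1) i a - x (vt p.2) i a)^2 * (x (vt p.1) i a * (1 - x (vt p.1) i a) + x (vt p.2) i a * (1 - x (vt p.2) i a)))) ≤ 2 * (η + Real.sqrt (γ * η)) := by
            have s0 : ∀ (p : E × E) i a, 0 ≤ x (vt p.1) i a * (1 - x (vt p.1) i a) + x (vt p.2) i a * (1 - x (vt p.2) i a) := by
              intro p i a
              exact add_nonneg (mul_nonneg (x0 _ _ _) (sub_nonneg.2 (x1 _ _ _))) (mul_nonneg (x0 _ _ _) (sub_nonneg.2 (x1 _ _ _)))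
            have cs := Real.sum_sqrt_mul_sqrt_le (univ : Finset ((E × E) × I × A'))
              (f := fun k => (W k.1 * ρ k.2.1) * (x (vt k.1.1) k.2.1 k.2.2 - x (vt k.1.2) k.2.1 k.2.2)^2)
              (g := fun k => (W k.1 * ρ k.2.1) * (x (vt k.1.1) k.2.1 k.2.2 * (1 - x (vt k.1.1) k.2.1 k.2.2) + x (vt k.1.2) k.2.1 k.2.2 * (1 - x (vt k.1.2) k.2.1 k.2.2)))
              (fun k => mul_nonneg (mul_nonneg (hW _) (hρ _)) (sq_nonneg _))
              (fun k => mul_nonneg (mul_nonneg (hW _) (hρ _)) (s0 _ _ _))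
            have e1 := Qk (fun p i a => (x (vt p.1) i a - x (vt p.2) i a)^2)
            have e2 := Qk (fun p i a => x (vt p.1) i a * (1 - x (vt p.1) i a) + x (vt p.2) i a * (1 - x (vt p.2) i a))
            rw [← e1, ← e2] at cs
            rw [Qk]
            have e3 : ∀ w d s : ℝ, 0 ≤ w → 0 ≤ d → w * Real.sqrt (d * s) = Real.sqrt (w * d) * Real.sqrt (w * s) := by
              intro w d s hw hd
              rw [← Real.sqrt_mul (mul_nonneg hw hd), show w * d * (w * s) = w^2 * (d * s) by ring,
                Real.sqrt_mul (sq_nonneg w), Real.sqrt_sq hw]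
            calc _ = _ := sum_congr rfl fun k _ => e3 _ _ _ (mul_nonneg (hW _) (hρ _)) (sq_nonneg _)
              _ ≤ _ := cs
              _ ≤ Real.sqrt (2 * η) * Real.sqrt (2 * (γ + η)) := by gcongr
              _ = Real.sqrt (2^2 * (γ * η + η^2)) := by
                rw [← Real.sqrt_mul (by positivity)]; congr 1; ring
              _ = 2 * Real.sqrt (γ * η + η^2) := by
                rw [Real.sqrt_mul (by norm_num), Real.sqrt_sq (by norm_num)]
              _ ≤ 2 * (Real.sqrt (γ * η) + Real.sqrt (η^2)) := by
                gcongr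
                have g1 : 0 ≤ γ * η := mul_nonneg hγ0.le hη
                have g2 := Real.sq_sqrt g1
                have g3 := Real.sq_sqrt (sq_nonneg η)
                have g4 := Real.sqrt_nonneg (γ * η)
                have g5 := Real.sqrt_nonneg (η^2)
                exact Real.sqrt_le_iff.2 ⟨by linarith, by nlinarith [mul_nonneg g4 g5]⟩
              _ = _ := by rw [Real.sqrt_sq hη]; ring
          linarith
  set B : I → V → Prop := fun i v => ∃ a, t < x v i a with hB
  have huniq : ∀ v i a a', t < x v i a → t < x v i a' → a = a' := by
    intro v i a a' ha ha'
    by_contra hne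
    have : x v i a + x v i a' ≤ ∑ a, x v i a := by
      rw [← sum_pair (f := fun a => x v i a) hne]
      exact sum_le_sum_of_subset_of_nonneg (subset_univ _) fun a _ _ => x0 v i a
    have := hx1 v i
    simp only [hx] at *
    linarith
  set c : I → E × E → ℝ := fun i p => ∑ a, (4 * D p i a + sp p i a) with hc
  have sp0 : ∀ p i a, 0 ≤ sp p i a := fun p i a => abs_nonneg _
  have ct0 : ∀ p i a, 0 ≤ 4 * D p i a + sp p i a := fun p i a => by linarith [D0 p i a, sp0 p i a]
  have c0 : ∀ i p, 0 ≤ c i p := fun i p => sum_nonneg fun a _ => ct0 p i a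
  have ca : ∀ i p a, 4 * D p i a + sp p i a ≤ c i p := fun i p a =>
    single_le_sum (f := fun a => 4 * D p i a + sp p i a) (fun a _ => ct0 p i a) (mem_univ a)
  have csp1 : ∀ i p a, t < x (vt p.1) i a → ¬ t < x (vt p.2) i a → 1 ≤ c i p := by
    intro i p a h1 h2
    have := ca i p a
    have e : sp p i a = 1 := by simp [hsp, h1, h2]
    linarith [D0 p i a]
  have csp2 : ∀ i p a, ¬ t < x (vt p.1) i a → t < x (vt p.2) i a → 1 ≤ c i p := by
    intro i p a h1 h2
    have := ca i p a
    have e : sp p i a = 1 := by simp [hsp, h1, h2]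
    linarith [D0 p i a]
  set S : Finset V := univ.filter (fun v => 9/10 ≤ N v) with hS
  obtain ⟨σ, hσ1, hσ2⟩ := pg_greedy (fun p : E × E => vt p.1) (fun p => vt p.2) W hW ρ hρ B c c0
    (by
      rintro i p ⟨a, ha⟩ hb
      exact csp1 i p a ha (fun h' => hb ⟨a, h'⟩))
    (by
      rintro i p hb ⟨a, ha⟩
      exact csp2 i p a (fun h' => hb ⟨a, h'⟩) ha)
    S.card S le_rfl
    (by
      intro v hv
      have hv : 9/10 ≤ N v := (mem_filter.1 hv).2
      have : N v ≤ ∑ i, ρ i * (3/4 + 1/4 * (if B i v then (1:ℝ) else 0)) := by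
        refine sum_le_sum fun i _ => mul_le_mul_of_nonneg_left ?_ (hρ i)
        have hs := hx1 v i
        by_cases hb : B i v
        · simp only [hb, if_true]
          calc ∑ a, x v i a ^2 ≤ ∑ a, x v i a := sum_le_sum fun a _ => by nlinarith [x0 v i a, x1 v i a]
            _ ≤ _ := by norm_num; exact hs
        · simp only [hb, if_false]
          have hb' : ∀ a, x v i a ≤ t := fun a => not_lt.1 fun h' => hb ⟨a, h'⟩
          calc ∑ a, x v i a ^2 ≤ ∑ a, (3/4) * x v i a := sum_le_sum fun a _ => by nlinarith [x0 v i a, hb' a]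
            _ = (3/4) * ∑ a, x v i a := by rw [mul_sum]
            _ ≤ _ := by
              have : ∑ a, x v i a ≤ 1 := hs
              linarith
      have e : ∑ i, ρ i * (3/4 + 1/4 * (if B i v then (1:ℝ) else 0)) = 3/4 * ∑ i, ρ i + 1/4 * ∑ i, ρ i * (if B i v then (1:ℝ) else 0) := by
        rw [mul_sum, mul_sum, ← sum_add_distrib]
        refine sum_congr rfl fun i _ => by ring
      rw [e, hρ1] at this
      linarith)
  choose! lab hlab using hσ1
  set f : V → A → ℝ := fun v β => if v ∈ S then h v β (σ v) (lab v) / x v (σ v) (lab v)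
    else if β = Classical.arbitrary A then 1 else 0 with hf
  have f0 : ∀ v β, 0 ≤ f v β := by
    intro v β; simp only [hf]; split_ifs
    · exact div_nonneg (h0 _ _ _ _) (x0 _ _ _)
    · norm_num
    · norm_num
  have f1 : ∀ v, ∑ β, f v β = 1 := by
    intro v
    by_cases hv : v ∈ S
    · simp only [hf, hv, if_true]
      rw [← sum_div]
      have hpos : 0 < x v (σ v) (lab v) := by linarith [hlab v hv]
      exact div_self hpos.ne'
    · simp [hf, hv]
  refine ⟨f, f0, f1, ?_⟩
  set val : E × E → ℝ := fun p => ∑ α,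
        (∑ β, if pr p.1 β = some α then f (vt p.1) β else 0) *
        (∑ β, if pr p.2 β = some α then f (vt p.2) β else 0) with hval
  have val0 : ∀ p, 0 ≤ val p := fun p => (pg_proj2 _ _ _ _ (f0 _) (f0 _)).1
  have hpair : ∀ p, vt p.1 ∈ S → vt p.2 ∈ S →
      1 - (if σ (vt p.1) = σ (vt p.2) then c (σ (vt p.1)) p else 1) ≤ val p := by
    intro p h1 h2
    by_cases hs : σ (vt p.1) = σ (vt p.2)
    · rw [if_pos hs]
      have l1 := hlab _ h1
      have l2 := hlab _ h2
      rw [← hs] at l2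
      by_cases hl : lab (vt p.1) = lab (vt p.2)
      · rw [← hl] at l2
        have hv : val p = bb p (σ (vt p.1)) (lab (vt p.1)) / (x (vt p.1) (σ (vt p.1)) (lab (vt p.1)) * x (vt p.2) (σ (vt p.1)) (lab (vt p.1))) := by
          simp only [hval, hbb]
          rw [sum_div]
          refine sum_congr rfl fun α _ => ?_
          rw [mul_div_mul_comm, sum_div, sum_div]
          congr 1
          · refine sum_congr rfl fun β _ => ?_
            simp only [hf, h1, if_true]
            split_ifs <;> simp
          · refine sum_congr rfl fun β _ => ?_
            simp only [hf, h2, if_true, ← hs, ← hl]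
            split_ifs <;> simp
        have q1 := ca (σ (vt p.1)) p (lab (vt p.1))
        have q2 := D2 p (σ (vt p.1)) (lab (vt p.1))
        have q3 := D0 p (σ (vt p.1)) (lab (vt p.1))
        have q4 := sp0 p (σ (vt p.1)) (lab (vt p.1))
        rw [hv]
        exact pg_arith _ _ _ _ _ _ t ht1 l1 l2 q1 q2 q3 q4
      · have : 1 ≤ c (σ (vt p.1)) p := csp1 _ p _ l1 (fun h' => hl (huniq _ _ _ _ h' l2))
        linarith [val0 p]
    · rw [if_neg hs]; linarith [val0 p]
  have hbad : ∀ v, (if v ∈ S then (0:ℝ) else 1) ≤ 12 * (1 - γ - N v) := by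
    intro v
    split_ifs with hv
    · have : N v ≤ 1 - γ := hN v
      linarith
    · have : N v < 9/10 := by
        by_contra h'
        exact hv (mem_filter.2 ⟨mem_univ _, not_lt.1 h'⟩)
      linarith
  have hfin : ∀ p, 1 - 12 * (1 - γ - N (vt p.1)) - 12 * (1 - γ - N (vt p.2))
      - (if vt p.1 ∈ S ∧ vt p.2 ∈ S then (if σ (vt p.1) = σ (vt p.2) then c (σ (vt p.1)) p else 1) else 0) ≤ val p := by
    intro p
    have b1 := hbad (vt p.1)
    have b2 := hbad (vt p.2)
    have := val0 p
    by_cases h1 : vt p.1 ∈ S <;> by_cases h2 : vt p.2 ∈ S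
    · have := hpair p h1 h2
      rw [if_pos ⟨h1, h2⟩]
      simp only [h1, h2, if_true] at b1 b2
      linarith
    all_goals
      simp only [h1, h2, if_true, if_false, and_true, and_false, true_and, false_and] at b1 b2 ⊢
      linarith
  have hsum := sum_le_sum fun (p : E × E) (_ : p ∈ univ) => mul_le_mul_of_nonneg_left (hfin p) (hW p)
  refine le_trans ?_ hsum
  have hcost : ∑ p, W p * (if vt p.1 ∈ S ∧ vt p.2 ∈ S then 2 * ∑ i, ρ i * c i p else 0) ≤ 2 * (4 * Q D + Q sp) := by
    rw [← Qmul, ← Qadd, ← Qmul]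
    simp only [hQ]
    refine sum_le_sum fun p _ => mul_le_mul_of_nonneg_left ?_ (hW p)
    have e : ∑ i, ρ i * ∑ a, 2 * (4 * D p i a + sp p i a) = 2 * ∑ i, ρ i * c i p := by
      simp only [hc, mul_sum]
      refine sum_congr rfl fun i _ => sum_congr rfl fun a _ => by ring
    rw [e]
    split_ifs
    · exact le_rfl
    · exact mul_nonneg (by norm_num) (sum_nonneg fun i _ => mul_nonneg (hρ i) (c0 i p))
  have e : ∑ p, W p * (1 - 12 * (1 - γ - N (vt p.1)) - 12 * (1 - γ - N (vt p.2))
      - (if vt p.1 ∈ S ∧ vt p.2 ∈ S then (if σ (vt p.1) = σ (vt p.2) then c (σ (vt p.1)) p else 1) else 0))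
      = (1 - 24 * (1 - γ)) * ∑ p, W p + 12 * ∑ p, W p * N (vt p.1) + 12 * ∑ p, W p * N (vt p.2)
        - ∑ p, W p * (if vt p.1 ∈ S ∧ vt p.2 ∈ S then (if σ (vt p.1) = σ (vt p.2) then c (σ (vt p.1)) p else 1) else 0) := by
    rw [mul_sum, mul_sum, mul_sum, ← sum_add_distrib, ← sum_add_distrib, ← sum_sub_distrib]
    refine sum_congr rfl fun p _ => by ring
  rw [e, hW1]
  have := Real.sqrt_nonneg (γ * η)
  linarith

namespace ProjGame

theorem pg_wU_nonneg (G : ProjGame) (u : G.Q1) : 0 ≤ G.wU u :=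
  sum_nonneg fun _ _ => sum_nonneg fun _ _ => G.μ_nonneg _

theorem pg_wU_eq (G : ProjGame) (u : G.Q1) :
    G.wU u = ∑ e : G.Q2 × (G.A → Option G.A), G.μ (u, e) := by
  rw [Fintype.sum_prod_type]; rfl

theorem pg_wU_sum (G : ProjGame) : ∑ u, G.wU u = 1 := by
  rw [← G.μ_sum, Fintype.sum_prod_type]
  exact sum_congr rfl fun u _ => G.pg_wU_eq u

noncomputable def pgProj (G : ProjGame) (f : G.Q2 × G.A → ℝ) (e : G.Q2 × (G.A → Option G.A))
    (α : G.A) : ℝ := ∑ β, if e.2 β = some α then f (e.1, β) else 0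

theorem pg_op_eq (G : ProjGame) (f : G.Q2 × G.A → ℝ) (u : G.Q1) (α : G.A) :
    G.op f (u, α) = (∑ e : G.Q2 × (G.A → Option G.A), G.μ (u, e) * G.pgProj f e α) / G.wU u := by
  rw [Fintype.sum_prod_type]; rfl

theorem pg_op_nonneg (G : ProjGame) (f : G.Q2 × G.A → ℝ) (hf : ∀ p, 0 ≤ f p) (p) :
    0 ≤ G.op f p := by
  obtain ⟨u, α⟩ := p
  rw [pg_op_eq]
  refine div_nonneg (sum_nonneg fun e _ => mul_nonneg (G.μ_nonneg _) ?_) (G.pg_wU_nonneg u)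
  exact (pg_proj e.2 (fun β => f (e.1, β)) (fun β => hf _)).1 α

theorem pg_op_sum (G : ProjGame) (f : G.Q2 × G.A → ℝ) (hf : G.IsBob f) (u) :
    ∑ α, G.op f (u, α) ≤ 1 := by
  simp only [pg_op_eq]
  rw [← sum_div]
  apply div_le_one_of_le₀ _ (G.pg_wU_nonneg u)
  rw [sum_comm, pg_wU_eq]
  refine sum_le_sum fun e _ => ?_
  rw [← mul_sum]
  refine mul_le_of_le_one_right (G.μ_nonneg _) ?_
  exact (pg_proj e.2 (fun β => f (e.1, β)) (fun β => hf.1 _)).2.trans (hf.2 _).le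

theorem pg_norm_le_one (G : ProjGame) (f : G.Q2 × G.A → ℝ) (hf : G.IsBob f) :
    G.normUsq (G.op f) ≤ 1 := by
  rw [← G.pg_wU_sum]
  refine sum_le_sum fun u _ => mul_le_of_le_one_right (G.pg_wU_nonneg u) ?_
  refine le_trans (sum_le_sum fun α _ => ?_) (G.pg_op_sum f hf u)
  have h0 := fun α => G.pg_op_nonneg f hf.1 (u, α)
  have h1 : G.op f (u, α) ≤ 1 :=
    (single_le_sum (f := fun α => G.op f (u, α)) (fun α _ => h0 α) (mem_univ α)).trans (G.pg_op_sum f hf u)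
  nlinarith [h0 α]

theorem pg_normUsq_nonneg (G : ProjGame) (g) : 0 ≤ G.normUsq g :=
  sum_nonneg fun u _ => mul_nonneg (G.pg_wU_nonneg u) (sum_nonneg fun _ _ => sq_nonneg _)

theorem pg_norm_le_coll (G : ProjGame) (f : G.Q2 × G.A → ℝ) (hf : G.IsBob f) :
    G.normUsq (G.op f) ≤ G.collVal ^ 2 := by
  have hb : BddAbove { x | ∃ f, G.IsBob f ∧ x = Real.sqrt (G.normUsq (G.op f)) } := by
    refine ⟨1, ?_⟩
    rintro x ⟨f, hf, rfl⟩
    exact Real.sqrt_le_one.2 (G.pg_norm_le_one f hf)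
  have : Real.sqrt (G.normUsq (G.op f)) ≤ G.collVal := le_csSup hb ⟨f, hf, rfl⟩
  calc _ = Real.sqrt (G.normUsq (G.op f)) ^ 2 := (Real.sq_sqrt (G.pg_normUsq_nonneg _)).symm
    _ ≤ _ := by gcongr

theorem pg_exists_bob (G : ProjGame) : ∃ f, G.IsBob f := by
  refine ⟨fun p => if p.2 = Classical.arbitrary G.A then 1 else 0, ?_, ?_⟩
  · intro p; dsimp only; split_ifs <;> norm_num
  · intro v; simp

theorem pg_coll_approx (G : ProjGame) (c : ℝ) (hc : c < G.collVal ^ 2) :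
    ∃ f, G.IsBob f ∧ c ≤ G.normUsq (G.op f) := by
  by_cases h0 : c < 0
  · obtain ⟨f, hf⟩ := G.pg_exists_bob
    exact ⟨f, hf, h0.le.trans (G.pg_normUsq_nonneg _)⟩
  push Not at h0
  have hcv : 0 ≤ G.collVal := by
    apply Real.sSup_nonneg
    rintro x ⟨f, hf, rfl⟩
    exact Real.sqrt_nonneg _
  have h1 : Real.sqrt c < G.collVal := (Real.sqrt_lt' (lt_of_le_of_ne hcv (by
    intro h; rw [← h] at hc; norm_num at hc; linarith))).2 hc
  obtain ⟨x, ⟨f, hf, rfl⟩, hx⟩ := exists_lt_of_lt_csSup (by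
    obtain ⟨f, hf⟩ := G.pg_exists_bob
    exact ⟨_, f, hf, rfl⟩) h1
  exact ⟨f, hf, ((Real.sqrt_lt_sqrt_iff h0).1 hx).le⟩

noncomputable def pgW (G : ProjGame)
    (p : (G.Q2 × (G.A → Option G.A)) × (G.Q2 × (G.A → Option G.A))) : ℝ :=
  ∑ u, G.μ (u, p.1) * G.μ (u, p.2) / G.wU u

theorem pg_W_nonneg (G : ProjGame) (p) : 0 ≤ G.pgW p :=
  sum_nonneg fun u _ => div_nonneg (mul_nonneg (G.μ_nonneg _) (G.μ_nonneg _)) (G.pg_wU_nonneg u)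

theorem pg_W_form (G : ProjGame) (F : G.Q2 × (G.A → Option G.A) → ℝ) :
    ∑ p, G.pgW p * (F p.1 * F p.2) = ∑ u, (∑ e, G.μ (u, e) * F e)^2 / G.wU u := by
  simp only [pgW, sum_mul]
  rw [sum_comm]
  refine sum_congr rfl fun u _ => ?_
  rw [Fintype.sum_prod_type, sq, sum_mul_sum, sum_div]
  refine sum_congr rfl fun e _ => ?_
  rw [sum_div]
  refine sum_congr rfl fun e' _ => ?_
  dsimp only
  ring

theorem pg_W_sum (G : ProjGame) : ∑ p, G.pgW p = 1 := by
  have := G.pg_W_form (fun _ => 1)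
  simp only [mul_one, ← pg_wU_eq] at this
  rw [this, ← G.pg_wU_sum]
  refine sum_congr rfl fun u _ => ?_
  rw [sq, mul_self_div_self]

theorem pg_norm_eq (G : ProjGame) (f : G.Q2 × G.A → ℝ) :
    G.normUsq (G.op f) = ∑ p, G.pgW p * ∑ α, G.pgProj f p.1 α * G.pgProj f p.2 α := by
  simp only [mul_sum]
  rw [sum_comm]
  simp only [fun α => G.pg_W_form (fun e => G.pgProj f e α)]
  rw [sum_comm]
  simp only [normUsq, pg_op_eq]
  refine sum_congr rfl fun u _ => ?_
  rw [mul_sum]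
  refine sum_congr rfl fun α _ => ?_
  by_cases hw : G.wU u = 0
  · simp [hw]
  · field_simp

theorem pg_tensorC {A A' : Type} (π : A → Option A) (π' : A' → Option A') (b α) :
    tensorC π π' b = some α ↔ π b.1 = some α.1 ∧ π' b.2 = some α.2 := by
  obtain ⟨α, α'⟩ := α
  unfold tensorC
  rcases π b.1 with _ | a <;> rcases π' b.2 with _ | a' <;> simp

theorem pg_sum_x (G : ProjGame) (u : G.Q1) (φ : G.Q2 × (G.A → Option G.A) → ℝ) :
    ∑ x, G.μ x * (if x.1 = u then φ x.2 else 0) = ∑ e, G.μ (u, e) * φ e := by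
  rw [Fintype.sum_prod_type, sum_eq_single u]
  · simp
  · intro b _ hb; simp [hb]
  · simp

theorem pg_op_x (G : ProjGame) (f : G.Q2 × G.A → ℝ) (u : G.Q1) (α : G.A) :
    G.op f (u, α) = (∑ x, G.μ x * (if x.1 = u then G.pgProj f x.2 α else 0)) / G.wU u := by
  rw [pg_op_eq, G.pg_sum_x u (fun e => G.pgProj f e α)]

theorem pg_wU_x (G : ProjGame) (u : G.Q1) :
    G.wU u = ∑ x, G.μ x * (if x.1 = u then 1 else 0) := by
  rw [pg_wU_eq, G.pg_sum_x u (fun _ => 1)]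
  simp

theorem pg_tsum (G H : ProjGame) (φ : (G.tensor H).Q1 × (G.tensor H).Q2 × ((G.tensor H).A → Option (G.tensor H).A) → ℝ) :
    ∑ x, (G.tensor H).μ x * φ x = ∑ y, ∑ z, G.μ y * H.μ z *
      φ ((y.1, z.1), (y.2.1, z.2.1), tensorC y.2.2 z.2.2) := by
  change ∑ x : (G.Q1 × H.Q1) × (G.Q2 × H.Q2) × (G.A × H.A → Option (G.A × H.A)), (∑ y : (G.Q1 × G.Q2 × (G.A → Option G.A)) × (H.Q1 × H.Q2 × (H.A → Option H.A)),
      if ((y.1.1, y.2.1), (y.1.2.1, y.2.2.1), tensorC y.1.2.2 y.2.2.2) = x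
      then G.μ y.1 * H.μ y.2 else 0) * φ x = _
  simp only [sum_mul]
  rw [sum_comm]
  simp only [ite_mul, zero_mul, Finset.sum_ite_eq, Finset.mem_univ, if_true]
  exact Fintype.sum_prod_type _

theorem pg_tsum2 (G H : ProjGame) (u : G.Q1) (u' : H.Q1) (w : (G.tensor H).Q1) (hw : w = (u, u'))
    (φ : (G.tensor H).Q2 × ((G.tensor H).A → Option (G.tensor H).A) → ℝ) :
    ∑ x, (G.tensor H).μ x * (if x.1 = w then φ x.2 else 0) = ∑ y, ∑ z, G.μ y * H.μ z *
      (if y.1 = u then (if z.1 = u' then φ ((y.2.1, z.2.1), tensorC y.2.2 z.2.2) else 0) else 0) := by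
  subst hw
  refine (pg_tsum G H _).trans ?_
  refine sum_congr rfl fun y _ => sum_congr rfl fun z _ => congrArg (fun s => G.μ y * H.μ z * s) ?_
  have : (((y.1, z.1) : G.Q1 × H.Q1) = (u, u')) ↔ (y.1 = u ∧ z.1 = u') := Prod.ext_iff
  by_cases h1 : y.1 = u
  · rw [if_pos h1]
    by_cases h2 : z.1 = u'
    · rw [if_pos h2]; exact if_pos (this.2 ⟨h1, h2⟩)
    · rw [if_neg h2]; exact if_neg (fun h => h2 (this.1 h).2)
  · rw [if_neg h1]; exact if_neg (fun h => h1 (this.1 h).1)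

theorem pg_wU_tensor (G H : ProjGame) (u : G.Q1) (u' : H.Q1) :
    (G.tensor H).wU (u, u') = G.wU u * H.wU u' := by
  refine (pg_wU_x (G.tensor H) (u, u')).trans ((pg_tsum2 G H u u' (u, u') rfl (fun _ => 1)).trans ?_)
  rw [pg_wU_x G, pg_wU_x H, sum_mul_sum]
  refine sum_congr rfl fun y _ => sum_congr rfl fun z _ => ?_
  split_ifs <;> ring

noncomputable def pgh (G H : ProjGame) (F : (G.tensor H).Q2 × (G.tensor H).A → ℝ)
    (v : G.Q2) (β : G.A) (i : H.Q1) (a : H.A) : ℝ :=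
  H.op (fun q => F ((v, q.1), (β, q.2))) (i, a)

theorem pg_proj_tensor (G H : ProjGame) (F : (G.tensor H).Q2 × (G.tensor H).A → ℝ)
    (e : G.Q2 × (G.A → Option G.A)) (e' : H.Q2 × (H.A → Option H.A)) (α : G.A) (α' : H.A) :
    (G.tensor H).pgProj F ((e.1, e'.1), tensorC e.2 e'.2) (α, α')
      = ∑ β, if e.2 β = some α then H.pgProj (fun q => F ((e.1, q.1), (β, q.2))) e' α' else 0 := by
  change (∑ b : G.A × H.A, if tensorC e.2 e'.2 b = some (α, α') then F ((e.1, e'.1), b) else 0) = _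
  rw [Fintype.sum_prod_type]
  refine sum_congr rfl fun β _ => ?_
  simp only [pg_tensorC]
  by_cases h : e.2 β = some α
  · simp [h, pgProj]
  · simp [h]

theorem pg_op_tensor (G H : ProjGame) (F : (G.tensor H).Q2 × (G.tensor H).A → ℝ)
    (u : G.Q1) (u' : H.Q1) (α : G.A) (α' : H.A) :
    (G.tensor H).op F ((u, u'), (α, α')) = G.op (fun p => G.pgh H F p.1 p.2 u' α') (u, α) := by
  refine (pg_op_x (G.tensor H) F (u, u') (α, α')).trans ?_
  refine (congrArg₂ (· / ·) (pg_tsum2 G H u u' (u, u') rfl (fun e => (G.tensor H).pgProj F e (α, α'))) (pg_wU_tensor G H u u')).trans ?_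
  refine Eq.trans ?_ (pg_op_x G _ u α).symm
  change (∑ y : G.Q1 × G.Q2 × (G.A → Option G.A), ∑ z : H.Q1 × H.Q2 × (H.A → Option H.A), G.μ y * H.μ z *
      (if y.1 = u then (if z.1 = u' then (G.tensor H).pgProj F ((y.2.1, z.2.1), tensorC y.2.2 z.2.2) (α, α') else 0) else 0)) / (G.wU u * H.wU u') = _
  rw [mul_comm (G.wU u), ← div_div]
  congr 1
  rw [sum_div]
  refine sum_congr rfl fun y _ => ?_
  rw [sum_div]
  have e : G.pgProj (fun p => G.pgh H F p.1 p.2 u' α') y.2 α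
      = (∑ z, H.μ z * (if z.1 = u' then (∑ β, if y.2.2 β = some α then H.pgProj (fun q => F ((y.2.1, q.1), (β, q.2))) z.2 α' else 0) else 0)) / H.wU u' := by
    simp only [pgProj, pgh]
    simp only [pg_op_x]
    rw [sum_div]
    have : ∀ z : H.Q1 × H.Q2 × (H.A → Option H.A), H.μ z * (if z.1 = u' then (∑ β, if y.2.2 β = some α then (∑ β', if z.2.2 β' = some α' then F ((y.2.1, z.2.1), (β, β')) else 0) else 0) else 0) / H.wU u'
       = ∑ β, if y.2.2 β = some α then H.μ z * (if z.1 = u' then (∑ β', if z.2.2 β' = some α' then F ((y.2.1, z.2.1), (β, β')) else 0) else 0) / H.wU u' else 0 := by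
      intro z
      by_cases hz : z.1 = u'
      · simp only [hz, if_true, mul_sum, sum_div]
        refine sum_congr rfl fun β _ => ?_
        split_ifs <;> simp [mul_sum, sum_div]
      · simp [hz]
    simp only [this]
    rw [sum_comm]
    refine sum_congr rfl fun β _ => ?_
    split_ifs
    · rw [sum_div]; rfl
    · simp
  rw [e]
  have hpt : ∀ z : H.Q1 × H.Q2 × (H.A → Option H.A), (G.tensor H).pgProj F ((y.2.1, z.2.1), tensorC y.2.2 z.2.2) (α, α')
      = ∑ β, if y.2.2 β = some α then H.pgProj (fun q => F ((y.2.1, q.1), (β, q.2))) z.2 α' else 0 := fun z =>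
    pg_proj_tensor G H F y.2 z.2 α α'
  simp only [hpt]
  by_cases h1 : y.1 = u
  · simp only [if_pos h1]
    rw [sum_div, mul_sum]
    refine sum_congr rfl fun z _ => ?_
    ring
  · simp [h1]

theorem pg_norm_tensor (G H : ProjGame) (F : (G.tensor H).Q2 × (G.tensor H).A → ℝ) :
    (G.tensor H).normUsq ((G.tensor H).op F) =
      ∑ i, H.wU i * ∑ a, G.normUsq (G.op (fun p => G.pgh H F p.1 p.2 i a)) := by
  change (∑ u : G.Q1 × H.Q1, (G.tensor H).wU u * ∑ α : G.A × H.A, ((G.tensor H).op F (u, α))^2) = _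
  rw [Fintype.sum_prod_type, sum_comm]
  refine sum_congr rfl fun i _ => ?_
  simp only [normUsq]
  rw [sum_comm, mul_sum]
  refine sum_congr rfl fun u _ => ?_
  rw [pg_wU_tensor, ← mul_sum, Fintype.sum_prod_type, sum_comm]
  simp only [pg_op_tensor]
  ring

theorem pg_op_lin (H : ProjGame) {K : Type*} [Fintype K] (g : K → H.Q2 × H.A → ℝ) (p) :
    ∑ k, H.op (g k) p = H.op (fun q => ∑ k, g k q) p := by
  obtain ⟨u, α⟩ := p
  simp only [pg_op_eq]
  rw [← sum_div, sum_comm]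
  congr 1
  refine sum_congr rfl fun e _ => ?_
  rw [← mul_sum]
  congr 1
  simp only [pgProj]
  rw [sum_comm]
  refine sum_congr rfl fun β _ => ?_
  split_ifs <;> simp

theorem pg_swap {P I A : Type*} [Fintype P] [Fintype I] [Fintype A] (W : P → ℝ) (r : I → ℝ)
    (S : P → I → A → ℝ) :
    ∑ i, r i * ∑ a, ∑ p, W p * S p i a = ∑ p, W p * ∑ i, r i * ∑ a, S p i a := by
  simp only [mul_sum]
  rw [sum_comm (s := (univ : Finset P))]
  refine sum_congr rfl fun i _ => ?_
  rw [sum_comm]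
  refine sum_congr rfl fun p _ => sum_congr rfl fun a _ => by ring

set_option maxHeartbeats 2000000 in
theorem pg_main (G H : ProjGame) (γ η : ℝ) (hγ0 : 0 < γ) (hγ : γ ≤ 1 / 100) (hη : 0 ≤ η)
    (hH : H.collVal ^ 2 ≤ 1 - γ) (F : (G.tensor H).Q2 × (G.tensor H).A → ℝ)
    (hF : (G.tensor H).IsBob F)
    (hFn : 1 - η - γ ≤ (G.tensor H).normUsq ((G.tensor H).op F)) :
    1 - 1000 * (η + Real.sqrt (γ * η)) ≤ G.collVal ^ 2 := by
  have hF1 : ∀ v v', ∑ β, ∑ β', F ((v, v'), (β, β')) = 1 := by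
    intro v v'
    have := hF.2 (v, v')
    change (∑ b : G.A × H.A, F ((v, v'), b)) = 1 at this
    rw [Fintype.sum_prod_type] at this
    exact this
  set fv : G.Q2 → H.Q2 × H.A → ℝ := fun v q => ∑ β, F ((v, q.1), (β, q.2)) with hfv
  have hbob : ∀ v, H.IsBob (fv v) := by
    intro v
    refine ⟨fun p => sum_nonneg fun β _ => hF.1 _, fun v' => ?_⟩
    simp only [hfv]
    rw [sum_comm]
    exact hF1 v v'
  have hsum : ∀ v i a, ∑ β, G.pgh H F v β i a = H.op (fv v) (i, a) := by
    intro v i a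
    simp only [pgh]
    rw [pg_op_lin]
  have k0 : ∀ v β i a, 0 ≤ G.pgh H F v β i a :=
    fun v β i a => H.pg_op_nonneg _ (fun q => hF.1 _) _
  have k1 : ∀ v i, ∑ a, ∑ β, G.pgh H F v β i a ≤ 1 := by
    intro v i
    simp only [hsum]
    exact H.pg_op_sum _ (hbob v) i
  have k2 : ∀ v, ∑ i, H.wU i * ∑ a, (∑ β, G.pgh H F v β i a) ^ 2 ≤ 1 - γ := by
    intro v
    simp only [hsum]
    exact (H.pg_norm_le_coll _ (hbob v)).trans hH
  have k3 : 1 - η - γ ≤ ∑ p, G.pgW p * ∑ i, H.wU i * ∑ a, ∑ α,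
      (∑ β, if p.1.2 β = some α then G.pgh H F p.1.1 β i a else 0) *
      (∑ β, if p.2.2 β = some α then G.pgh H F p.2.1 β i a else 0) := by
    rw [pg_norm_tensor] at hFn
    refine hFn.trans (le_of_eq ?_)
    simp only [pg_norm_eq, pgProj]
    rw [pg_swap]
  clear_value fv
  have := pg_core (E := G.Q2 × (G.A → Option G.A)) (fun e => e.1) (fun e => e.2)
    G.pgW G.pg_W_nonneg G.pg_W_sum H.wU H.pg_wU_nonneg H.pg_wU_sum (G.pgh H F) k0 k1 γ η hγ0 hγ hη k2 k3
  obtain ⟨f, f0, f1, f2⟩ := this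
  have k4 := G.pg_norm_le_coll (fun p => f p.1 p.2) ⟨fun p => f0 _ _, f1⟩
  rw [pg_norm_eq] at k4
  simp only [pgProj] at k4
  exact le_trans f2 k4

end ProjGame

/-- **Few repetitions, two games.** There is a universal `C > 0` such that: if
`‖H‖² ≤ 1 - γ` (`0 < γ ≤ 1/100`) and `‖G ⊗ H‖² ≥ 1 - η - γ` (`η ≥ 0`), then
`‖G‖² ≥ 1 - C(η + √(γη))`. -/
theorem two_games_bound :
    ∃ C : ℝ, 0 < C ∧
      ∀ (G H : ProjGame) (γ η : ℝ), 0 < γ → γ ≤ 1 / 100 → 0 ≤ η →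
        H.collVal ^ 2 ≤ 1 - γ → 1 - η - γ ≤ (G.tensor H).collVal ^ 2 →
          1 - C * (η + Real.sqrt (γ * η)) ≤ G.collVal ^ 2 := by
  refine ⟨1000, by norm_num, ?_⟩
  intro G H γ η hγ0 hγ hη hH hGH
  have key : ∀ ε : ℝ, 0 < ε → 1 - 1000 * ((η + ε) + Real.sqrt (γ * (η + ε))) ≤ G.collVal ^ 2 := by
    intro ε hε
    obtain ⟨F, hF, hFn⟩ := (G.tensor H).pg_coll_approx (1 - (η + ε) - γ) (by linarith)
    exact ProjGame.pg_main G H γ (η + ε) hγ0 hγ (by linarith) hH F hF hFn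
  have hcont : Continuous (fun ε : ℝ => 1 - 1000 * ((η + ε) + Real.sqrt (γ * (η + ε)))) := by fun_prop
  have ht := (hcont.tendsto 0).mono_left (nhdsWithin_le_nhds (s := Set.Ioi 0))
  simp only [add_zero] at ht
  refine le_of_tendsto ht ?_
  filter_upwards [self_mem_nhdsWithin] with ε hε
  exact key ε hε
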